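/- arXiv:1504.02625 — 2 statements merged into one kernel-verified Lean document; each statement's English description precedes it below -/
import Mathlib

section
/- If λ ≠ 0 and λ ∉ ⋃_{k=1}^n Essran(h_k), then the operator T₁ − λE is invertible on H with bounded inverse, and the inverse is given by ((T₁ − λE)⁻¹ f)(x,y) = −(1/λ)·( f(x,y) − Σ_{k=1}^n (h_k(y)/(h_k(y) − λ))·(P_k f)(x,y) ) for all f ∈ H. -/
open MeasureTheory Complex

noncomputable section

/-- The measure on `ℝ` given by restricting Lebesgue measure to `[a,b]`. -/
abbrev muI (a b : ℝ) : MeasureTheory.Measure ℝ :=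
  MeasureTheory.volume.restrict (Set.Icc a b)

/-- The essential range of a function `φ` with respect to a measure `μ` on `ℝ`:
the set of `l` such that for every `ε > 0` the set `{ξ : l - ε < φ ξ < l + ε}` has
positive measure. -/
def Essran (μ : MeasureTheory.Measure ℝ) (φ : ℝ → ℝ) : Set ℝ :=
  {l : ℝ | ∀ ε > 0, 0 < μ {ξ : ℝ | l - ε < φ ξ ∧ φ ξ < l + ε}}

/-!
Let `M u` denote multiplication by a bounded function `u` of `y`. Since `P k` acts in `x` only, it
commutes with every `M u`, so `u ↦ ∑ k, M (u k) * P k` is multiplicative on families of bounded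
functions because the `P k` are orthogonal idempotents; for this it suffices that `P k` has kernel
`φ k x * ψ k s` with `φ` and `ψ` biorthogonal. The operator `T` is the value of this map at `h`.
The family `g k = h k / (h k - l)`, bounded because `l` is away from the essential range of `h k`,
satisfies `h k * g k = h k + l • g k`; hence `S = ∑ k, M (g k) * P k` satisfies
`T * S = S * T = T + l • S`, that is, `(T - l) * (1 - S) = (1 - S) * (T - l) = -l`.
-/

section Algebra

theorem sum_mul_mul_sum_mul {ι R : Type*} [Fintype ι] [Semiring R] {P V : ι → R}
    (hP : OrthogonalIdempotents P) (hPV : ∀ j k, Commute (P j) (V k)) (U : ι → R) :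
    (∑ j, U j * P j) * (∑ k, V k * P k) = ∑ k, U k * V k * P k := by
  classical
  have hterm (j k : ι) :
      U j * P j * (V k * P k) = if j = k then U j * V j * P j else 0 := by
    calc U j * P j * (V k * P k) = U j * (P j * V k) * P k := by simp only [mul_assoc]
      _ = U j * V k * (P j * P k) := by rw [(hPV j k).eq]; simp only [mul_assoc]
      _ = if j = k then U j * V j * P j else 0 := by
        rw [hP.mul_eq]
        split_ifs with hjk
        · rw [hjk]
        · rw [mul_zero]
  simp only [Finset.sum_mul_sum, hterm, Finset.sum_ite_eq, Finset.mem_univ, if_true]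

theorem sum_mul_mul_sum_mul_eq_add_smul {ι 𝕜 A : Type*} [Fintype ι] [CommSemiring 𝕜] [Semiring A]
    [Algebra 𝕜 A] {P U V X Y : ι → A} {l : 𝕜} (hP : OrthogonalIdempotents P)
    (hPV : ∀ j k, Commute (P j) (V k)) (hUV : ∀ k, U k * V k = X k + l • Y k) :
    (∑ j, U j * P j) * (∑ k, V k * P k) = ∑ k, X k * P k + l • ∑ k, Y k * P k := by
  simp only [sum_mul_mul_sum_mul hP hPV, hUV, add_mul, smul_mul_assoc, Finset.sum_add_distrib,
    Finset.smul_sum]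

variable {𝕜 A : Type*} [Field 𝕜] [Ring A] [Algebra 𝕜 A] {T S : A} {l : 𝕜}

theorem sub_smul_one_mul_eq_one (hl : l ≠ 0) (hTS : T * S = T + l • S) :
    (T - l • 1) * (-(1 / l) • (1 - S)) = 1 := by
  have hneg : (T - l • 1) * (1 - S) = -l • (1 : A) := by
    rw [mul_sub, mul_one, sub_mul, hTS, smul_one_mul, neg_smul]; abel
  rw [mul_smul_comm, hneg, smul_smul, neg_mul_neg, one_div_mul_cancel hl, one_smul]

theorem mul_sub_smul_one_eq_one (hl : l ≠ 0) (hST : S * T = T + l • S) :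
    (-(1 / l) • (1 - S)) * (T - l • 1) = 1 := by
  have hneg : (1 - S) * (T - l • 1) = -l • (1 : A) := by
    rw [sub_mul, one_mul, mul_sub, hST, mul_smul_one, neg_smul]; abel
  rw [smul_mul_assoc, hneg, smul_smul, neg_mul_neg, one_div_mul_cancel hl, one_smul]

end Algebra

open scoped ENNReal

section EssentialRange

variable {β E : Type*} [MeasurableSpace β] {ν : Measure β}

/-- The essential range of a function with values in a metric space, with respect to `ν`: the
points all of whose balls have a preimage of positive measure. It extends `Essran` beyond
real-valued functions on `ℝ`, see `ofReal_mem_essentialRange_iff`. -/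
def essentialRange [PseudoMetricSpace E] (ν : Measure β) (u : β → E) : Set E :=
  {l | ∀ ε > 0, 0 < ν (u ⁻¹' Metric.ball l ε)}

theorem exists_ae_le_dist_of_notMem_essentialRange [PseudoMetricSpace E] {u : β → E} {l : E}
    (hl : l ∉ essentialRange ν u) : ∃ ε > 0, ∀ᵐ y ∂ν, ε ≤ dist (u y) l := by
  simp only [essentialRange, Set.mem_ofPred_eq, not_forall, not_lt, nonpos_iff_eq_zero] at hl
  obtain ⟨ε, hε, hnull⟩ := hl
  refine ⟨ε, hε, ?_⟩
  filter_upwards [measure_eq_zero_iff_ae_notMem.1 hnull] with y hy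
  exact not_lt.1 hy

theorem ae_ne_of_notMem_essentialRange [PseudoMetricSpace E] {u : β → E} {l : E}
    (hl : l ∉ essentialRange ν u) : ∀ᵐ y ∂ν, u y ≠ l := by
  obtain ⟨ε, hε, hdist⟩ := exists_ae_le_dist_of_notMem_essentialRange hl
  filter_upwards [hdist] with y hy heq
  rw [heq, dist_self] at hy
  exact hε.not_ge hy

theorem memLp_top_div_sub_const {𝕜 : Type*} [RCLike 𝕜] {u : β → 𝕜} {l : 𝕜} (hu : MemLp u ∞ ν)
    (hl : l ∉ essentialRange ν u) : MemLp (fun y => u y / (u y - l)) ∞ ν := by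
  obtain ⟨ε, hε, hdist⟩ := exists_ae_le_dist_of_notMem_essentialRange hl
  have hinv : MemLp (fun y => (u y - l)⁻¹) ∞ ν := by
    refine memLp_top_of_bound
      (hu.aestronglyMeasurable.aemeasurable.sub_const l).inv.aestronglyMeasurable ε⁻¹ ?_
    filter_upwards [hdist] with y hy
    rw [norm_inv, ← dist_eq_norm]
    exact inv_anti₀ hε hy
  simpa only [div_eq_mul_inv] using hinv.mul' hu

theorem memLp_top_ofReal {u : β → ℝ} (hu : AEStronglyMeasurable u ν)
    (hbdd : ∃ C : ℝ, ∀ᵐ y ∂ν, |u y| ≤ C) : MemLp (fun y => (u y : ℂ)) ∞ ν :=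
  let ⟨C, hC⟩ := hbdd
  (memLp_top_of_bound hu C hC).ofReal

theorem ofReal_mem_essentialRange_iff {μ : Measure ℝ} {u : ℝ → ℝ} {l : ℝ} :
    (l : ℂ) ∈ essentialRange μ (fun y => (u y : ℂ)) ↔ l ∈ Essran μ u := by
  have hball (ε : ℝ) : (fun y => (u y : ℂ)) ⁻¹' Metric.ball (l : ℂ) ε =
      {y | l - ε < u y ∧ u y < l + ε} := by
    ext y
    rw [Set.mem_preimage, Metric.mem_ball, isometry_ofReal.dist_eq, ← Metric.mem_ball,
      Real.ball_eq_Ioo]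
    rfl
  simp only [essentialRange, Essran, Set.mem_ofPred_eq, hball]

end EssentialRange

section MultiplicationOperator

variable {α 𝕜 : Type*} [MeasurableSpace α] [RCLike 𝕜] {μ : Measure α} {p : ℝ≥0∞} [Fact (1 ≤ p)]
  {u v w : α → 𝕜}

/-- The operator of multiplication by an essentially bounded function `u` on `Lp 𝕜 p μ`. -/
def mulLp (hu : MemLp u ∞ μ) : Lp 𝕜 p μ →L[𝕜] Lp 𝕜 p μ :=
  (ContinuousLinearMap.mul 𝕜 𝕜).holderL μ ∞ p p (hu.toLp u)

theorem coeFn_mulLp (hu : MemLp u ∞ μ) (f : Lp 𝕜 p μ) :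
    ∀ᵐ x ∂μ, mulLp hu f x = u x * f x := by
  filter_upwards [(ContinuousLinearMap.mul 𝕜 𝕜).coeFn_holder (r := p) (hu.toLp u) f,
    hu.coeFn_toLp] with x hx hux
  rw [mulLp, ContinuousLinearMap.holderL_apply_apply, hx, hux, ContinuousLinearMap.mul_apply']

theorem mulLp_add_smul (hu : MemLp u ∞ μ) (hv : MemLp v ∞ μ) (l : 𝕜) :
    mulLp (p := p) (hu.add (hv.const_smul l)) = mulLp hu + l • mulLp hv := by
  rw [mulLp, MemLp.toLp_add hu (hv.const_smul l), MemLp.toLp_const_smul, map_add, map_smul]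
  rfl

theorem mulLp_mul_mulLp (hu : MemLp u ∞ μ) (hv : MemLp v ∞ μ) (hw : MemLp w ∞ μ)
    (huv : u * v =ᵐ[μ] w) : mulLp (p := p) hu * mulLp hv = mulLp hw := by
  ext1 f
  apply Lp.ext
  filter_upwards [coeFn_mulLp hu (mulLp hv f), coeFn_mulLp hv f, coeFn_mulLp hw f, huv]
    with x hux hvx hwx huvx
  rw [mul_apply_eq_comp, hux, hvx, hwx, ← huvx, Pi.mul_apply, mul_assoc]

theorem commute_mulLp (hu : MemLp u ∞ μ) (hv : MemLp v ∞ μ) :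
    Commute (mulLp (p := p) hu) (mulLp hv) :=
  (mulLp_mul_mulLp hu hv (hv.mul hu) .rfl).trans
    (mulLp_mul_mulLp hv hu (hv.mul hu) (.of_eq (mul_comm v u))).symm

theorem mulLp_mul_mulLp_div_sub_const {l : 𝕜} (hu : MemLp u ∞ μ)
    (hw : MemLp (fun x => u x / (u x - l)) ∞ μ) (hne : ∀ᵐ x ∂μ, u x ≠ l) :
    mulLp (p := p) hu * mulLp hw = mulLp hu + l • mulLp hw := by
  rw [← mulLp_add_smul]
  refine mulLp_mul_mulLp hu hw _ ?_
  filter_upwards [hne] with x hx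
  have hsub : u x - l ≠ 0 := sub_ne_zero.2 hx
  simp only [Pi.mul_apply, Pi.add_apply, Pi.smul_apply, smul_eq_mul]
  field_simp
  ring

theorem coeFn_smul_one_sub_sum_mulLp_mul {ι : Type*} [Fintype ι] {u : ι → α → 𝕜}
    (hu : ∀ k, MemLp (u k) ∞ μ) (P : ι → Lp 𝕜 p μ →L[𝕜] Lp 𝕜 p μ) (c : 𝕜) (f : Lp 𝕜 p μ) :
    ∀ᵐ x ∂μ, (c • (1 - ∑ k, mulLp (hu k) * P k) : Lp 𝕜 p μ →L[𝕜] Lp 𝕜 p μ) f x =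
      c * (f x - ∑ k, u k x * P k f x) := by
  have happly : (c • (1 - ∑ k, mulLp (hu k) * P k) : Lp 𝕜 p μ →L[𝕜] Lp 𝕜 p μ) f =
      c • (f - ∑ k, mulLp (hu k) (P k f)) := by
    simp only [smul_apply, sub_apply, one_apply_eq_self, sum_apply, mul_apply_eq_comp]
  filter_upwards [Lp.coeFn_smul c (f - ∑ k, mulLp (hu k) (P k f)),
    Lp.coeFn_sub f (∑ k, mulLp (hu k) (P k f)),
    Lp.coeFn_fun_finsetSum Finset.univ fun k => mulLp (hu k) (P k f),
    ae_all_iff.2 fun k => coeFn_mulLp (hu k) (P k f)] with x hsmul hsub hsum hmul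
  simp only [happly, hsmul, Pi.smul_apply, hsub, Pi.sub_apply, hsum, hmul, smul_eq_mul]

end MultiplicationOperator

section Slices

variable {α β E : Type*} [MeasurableSpace α] [MeasurableSpace β] [NormedAddCommGroup E]
  {μ : Measure α} {ν : Measure β}

theorem memLp_top_comp_of_quasiMeasurePreserving {u : β → E} {g : α → β} (hu : MemLp u ∞ ν)
    (hg : Measure.QuasiMeasurePreserving g μ ν) : MemLp (u ∘ g) ∞ μ := by
  refine MemLp.comp_of_map ⟨hu.aestronglyMeasurable.mono_ac hg.absolutelyContinuous, ?_⟩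
    hg.aemeasurable
  exact (eLpNormEssSup_mono_measure u hg.absolutelyContinuous).trans_lt hu.eLpNorm_lt_top

variable [SFinite μ] [SFinite ν]

theorem ae_prod_ae_slice {q : α × β → Prop} (hq : ∀ᵐ z ∂μ.prod ν, q z) :
    ∀ᵐ z ∂μ.prod ν, ∀ᵐ s ∂μ, q (s, z.2) :=
  Measure.quasiMeasurePreserving_snd.ae <| Measure.ae_ae_of_ae_prod <|
    Measure.measurePreserving_swap.quasiMeasurePreserving.ae hq

theorem ae_prod_memLp_slice {p : ℝ≥0∞} {f : α × β → E} (hf : MemLp f p (μ.prod ν)) :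
    ∀ᵐ z ∂μ.prod ν, MemLp (fun s => f (s, z.2)) p μ := by
  have hmeas : ∀ᵐ z ∂μ.prod ν, AEStronglyMeasurable (fun s => f (s, z.2)) μ :=
    Measure.quasiMeasurePreserving_snd.ae hf.aestronglyMeasurable.prod_swap.prodMk_left
  rcases eq_or_ne p 0 with rfl | hp0
  · simpa only [memLp_zero_iff_aestronglyMeasurable] using hmeas
  rcases eq_or_ne p ∞ with rfl | hp
  · filter_upwards [hmeas, ae_prod_ae_slice (ae_le_eLpNormEssSup (f := f) (μ := μ.prod ν))]
      with z hz hbound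
    exact ⟨hz, (essSup_le_of_ae_le _ hbound).trans_lt hf.eLpNorm_lt_top⟩
  · have hint : ∀ᵐ z ∂μ.prod ν, Integrable (fun s => ‖f (s, z.2)‖ ^ p.toReal) μ :=
      Measure.quasiMeasurePreserving_snd.ae (hf.integrable_norm_rpow hp0 hp).prod_left_ae
    filter_upwards [hmeas, hint] with z hz hzint
    exact (integrable_norm_rpow_iff hz hp0 hp).1 hzint

end Slices

section PartialIntegralOperator

variable {α β 𝕜 : Type*} [MeasurableSpace α] [MeasurableSpace β] [RCLike 𝕜] {μ : Measure α}
  {ν : Measure β} {p : ℝ≥0∞} [Fact (1 ≤ p)]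

/-- `T` is the partial integral operator with kernel `K`: it integrates against `K` in the first
variable only, the second variable `y` being a parameter. The arguments of `K` are `x`, the
integration variable `s`, and `y`. -/
def IsPartialIntegralOperator (K : α → α → β → 𝕜)
    (T : Lp 𝕜 p (μ.prod ν) →L[𝕜] Lp 𝕜 p (μ.prod ν)) : Prop :=
  ∀ f : Lp 𝕜 p (μ.prod ν), ∀ᵐ z ∂μ.prod ν, T f z = ∫ s, K z.1 s z.2 * f (s, z.2) ∂μ

namespace IsPartialIntegralOperator

variable {K : α → α → β → 𝕜} {S T : Lp 𝕜 p (μ.prod ν) →L[𝕜] Lp 𝕜 p (μ.prod ν)}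

theorem unique (hS : IsPartialIntegralOperator K S) (hT : IsPartialIntegralOperator K T) :
    S = T := by
  ext1 f
  apply Lp.ext
  filter_upwards [hS f, hT f] with z hSz hTz
  rw [hSz, hTz]

theorem zero : IsPartialIntegralOperator (0 : α → α → β → 𝕜)
    (0 : Lp 𝕜 p (μ.prod ν) →L[𝕜] Lp 𝕜 p (μ.prod ν)) := by
  intro f
  filter_upwards [Lp.coeFn_zero 𝕜 p (μ.prod ν)] with z hz
  simp only [zero_apply, hz, Pi.zero_apply, zero_mul, integral_zero]

theorem mulLp_comp_snd_mul {u : β → 𝕜} (hu : MemLp (u ∘ Prod.snd) ∞ (μ.prod ν))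
    (hT : IsPartialIntegralOperator K T) :
    IsPartialIntegralOperator (fun x s y => K x s y * u y) (mulLp hu * T) := by
  intro f
  filter_upwards [coeFn_mulLp hu (T f), hT f] with z hmul hz
  rw [mul_apply_eq_comp, hmul, hz, Function.comp_apply, ← integral_const_mul]
  simp only [mul_assoc, mul_left_comm]

theorem sum {ι : Type*} [Fintype ι] {K : ι → α → α → β → 𝕜}
    {T : ι → Lp 𝕜 p (μ.prod ν) →L[𝕜] Lp 𝕜 p (μ.prod ν)}
    (hT : ∀ k, IsPartialIntegralOperator (K k) (T k))
    (hK : ∀ k, ∀ f : Lp 𝕜 p (μ.prod ν),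
      ∀ᵐ z ∂μ.prod ν, Integrable (fun s => K k z.1 s z.2 * f (s, z.2)) μ) :
    IsPartialIntegralOperator (fun x s y => ∑ k, K k x s y) (∑ k, T k) := by
  intro f
  filter_upwards [Lp.coeFn_fun_finsetSum Finset.univ fun k => T k f,
    ae_all_iff.2 fun k => hT k f, ae_all_iff.2 fun k => hK k f] with z hsum hz hint
  simp only [sum_apply, hsum, hz, Finset.sum_mul]
  exact (integral_finsetSum _ fun k _ => hint k).symm

theorem separated_iff {φ ψ : α → 𝕜} :
    IsPartialIntegralOperator (fun x s _ => φ x * ψ s) T ↔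
      ∀ f : Lp 𝕜 p (μ.prod ν), ∀ᵐ z ∂μ.prod ν, T f z = φ z.1 * ∫ s, ψ s * f (s, z.2) ∂μ := by
  simp only [IsPartialIntegralOperator, mul_assoc, integral_const_mul]

variable [SFinite μ] [SFinite ν]

theorem commute_mulLp_comp_snd {u : β → 𝕜} (hT : IsPartialIntegralOperator K T)
    (hu : MemLp (u ∘ Prod.snd) ∞ (μ.prod ν)) : Commute T (mulLp hu) := by
  refine ContinuousLinearMap.ext fun f => Lp.ext ?_
  filter_upwards [hT (mulLp hu f), coeFn_mulLp hu (T f), hT f,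
    ae_prod_ae_slice (coeFn_mulLp hu f)] with z hTmul hmulT hTz hslice
  calc T (mulLp hu f) z = ∫ s, K z.1 s z.2 * mulLp hu f (s, z.2) ∂μ := hTmul
    _ = ∫ s, u z.2 * (K z.1 s z.2 * f (s, z.2)) ∂μ := by
      refine integral_congr_ae ?_
      filter_upwards [hslice] with s hs
      rw [hs, mul_left_comm, Function.comp_apply]
    _ = mulLp hu (T f) z := by
      rw [integral_const_mul, ← hTz, hmulT, Function.comp_apply]

theorem mul_of_separated {φ ψ φ' ψ' : α → 𝕜}
    (hS : IsPartialIntegralOperator (fun x s _ => φ x * ψ s) S)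
    (hT : IsPartialIntegralOperator (fun x s _ => φ' x * ψ' s) T) :
    IsPartialIntegralOperator (fun x s _ => (∫ t, ψ t * φ' t ∂μ) * (φ x * ψ' s)) (S * T) := by
  intro f
  filter_upwards [hS (T f), ae_prod_ae_slice (hT f)] with z hSz hslice
  calc S (T f) z = ∫ t, φ z.1 * ψ t * T f (t, z.2) ∂μ := hSz
    _ = ∫ t, φ z.1 * (∫ s, ψ' s * f (s, z.2) ∂μ) * (ψ t * φ' t) ∂μ := by
      refine integral_congr_ae ?_
      filter_upwards [hslice] with t ht
      simp only [ht, mul_assoc, integral_const_mul]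
      ring
    _ = ∫ s, (∫ t, ψ t * φ' t ∂μ) * (φ z.1 * ψ' s) * f (s, z.2) ∂μ := by
      simp only [mul_assoc, integral_const_mul]
      ring

theorem orthogonalIdempotents {ι : Type*} [DecidableEq ι] {φ ψ : ι → α → 𝕜}
    {P : ι → Lp 𝕜 p (μ.prod ν) →L[𝕜] Lp 𝕜 p (μ.prod ν)}
    (hP : ∀ k, IsPartialIntegralOperator (fun x s _ => φ k x * ψ k s) (P k))
    (hbiorth : ∀ i j, ∫ s, ψ i s * φ j s ∂μ = if i = j then 1 else 0) :
    OrthogonalIdempotents P where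
  idem k := by
    have hPP := mul_of_separated (hP k) (hP k)
    simp only [hbiorth, if_true, one_mul] at hPP
    exact hPP.unique (hP k)
  ortho i j hij := by
    have hPP := mul_of_separated (hP i) (hP j)
    simp only [hbiorth, if_neg hij, zero_mul] at hPP
    exact hPP.unique zero

theorem eq_sum_mulLp_mul {ι : Type*} [Fintype ι] {q : ℝ≥0∞} [ENNReal.HolderConjugate p q]
    {φ ψ : ι → α → 𝕜} (hψ : ∀ k, MemLp (ψ k) q μ) {h : ι → β → 𝕜}
    (hh : ∀ k, MemLp (h k ∘ Prod.snd) ∞ (μ.prod ν))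
    (hT : IsPartialIntegralOperator (fun x s y => ∑ k, φ k x * ψ k s * h k y) T)
    {P : ι → Lp 𝕜 p (μ.prod ν) →L[𝕜] Lp 𝕜 p (μ.prod ν)}
    (hP : ∀ k, IsPartialIntegralOperator (fun x s _ => φ k x * ψ k s) (P k)) :
    T = ∑ k, mulLp (hh k) * P k := by
  refine hT.unique (sum (fun k => (hP k).mulLp_comp_snd_mul (hh k)) fun k f => ?_)
  filter_upwards [ae_prod_memLp_slice (Lp.memLp f)] with z hz
  refine ((hz.integrable_mul (hψ k)).const_mul (φ k z.1 * h k z.2)).congr (.of_forall fun s => ?_)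
  simp only [Pi.mul_apply]
  ring

end IsPartialIntegralOperator

end PartialIntegralOperator

theorem statement1_general {α β 𝕜 ι : Type*} [MeasurableSpace α] [MeasurableSpace β] [RCLike 𝕜]
    [Fintype ι] [DecidableEq ι] {μ : Measure α} {ν : Measure β} [SFinite μ] [SFinite ν]
    {p q : ℝ≥0∞} [Fact (1 ≤ p)] [ENNReal.HolderConjugate p q]
    {φ ψ : ι → α → 𝕜} (hψ : ∀ k, MemLp (ψ k) q μ)
    (hbiorth : ∀ i j, ∫ s, ψ i s * φ j s ∂μ = if i = j then 1 else 0)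
    {h : ι → β → 𝕜} (hh : ∀ k, MemLp (h k) ∞ ν)
    {T : Lp 𝕜 p (μ.prod ν) →L[𝕜] Lp 𝕜 p (μ.prod ν)}
    (hT : IsPartialIntegralOperator (fun x s y => ∑ k, φ k x * ψ k s * h k y) T)
    {P : ι → Lp 𝕜 p (μ.prod ν) →L[𝕜] Lp 𝕜 p (μ.prod ν)}
    (hP : ∀ k, IsPartialIntegralOperator (fun x s _ => φ k x * ψ k s) (P k))
    {l : 𝕜} (hl0 : l ≠ 0) (hl : l ∉ ⋃ k, essentialRange ν (h k)) :
    ∃ B : Lp 𝕜 p (μ.prod ν) →L[𝕜] Lp 𝕜 p (μ.prod ν),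
      (T - l • 1) * B = 1 ∧ B * (T - l • 1) = 1 ∧
      ∀ f : Lp 𝕜 p (μ.prod ν), ∀ᵐ z ∂μ.prod ν,
        B f z = -(1 / l) * (f z - ∑ k, h k z.2 / (h k z.2 - l) * P k f z) := by
  have hl' (k : ι) : l ∉ essentialRange ν (h k) := fun hk => hl (Set.mem_iUnion.2 ⟨k, hk⟩)
  have hH (k : ι) : MemLp (h k ∘ Prod.snd) ∞ (μ.prod ν) :=
    memLp_top_comp_of_quasiMeasurePreserving (hh k) Measure.quasiMeasurePreserving_snd
  have hG (k : ι) : MemLp ((fun y => h k y / (h k y - l)) ∘ Prod.snd) ∞ (μ.prod ν) :=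
    memLp_top_comp_of_quasiMeasurePreserving (memLp_top_div_sub_const (hh k) (hl' k))
      Measure.quasiMeasurePreserving_snd
  have hHG (k : ι) : mulLp (p := p) (hH k) * mulLp (hG k) = mulLp (hH k) + l • mulLp (hG k) :=
    mulLp_mul_mulLp_div_sub_const (hH k) (hG k) <|
      Measure.quasiMeasurePreserving_snd.ae (ae_ne_of_notMem_essentialRange (hl' k))
  have hGH (k : ι) : mulLp (p := p) (hG k) * mulLp (hH k) = mulLp (hH k) + l • mulLp (hG k) :=
    (commute_mulLp (hG k) (hH k)).eq.trans (hHG k)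
  have hPid : OrthogonalIdempotents P :=
    IsPartialIntegralOperator.orthogonalIdempotents hP hbiorth
  set S := ∑ k, mulLp (hG k) * P k
  have hTsum : T = ∑ k, mulLp (hH k) * P k := hT.eq_sum_mulLp_mul hψ hH hP
  have hTS : T * S = T + l • S := hTsum ▸
    sum_mul_mul_sum_mul_eq_add_smul hPid (fun j k => (hP j).commute_mulLp_comp_snd (hG k)) hHG
  have hST : S * T = T + l • S := hTsum ▸
    sum_mul_mul_sum_mul_eq_add_smul hPid (fun j k => (hP j).commute_mulLp_comp_snd (hH k)) hGH
  exact ⟨-(1 / l) • (1 - S), sub_smul_one_mul_eq_one hl0 hTS, mul_sub_smul_one_eq_one hl0 hST,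
    coeFn_smul_one_sub_sum_mulLp_mul hG P (-(1 / l))⟩

theorem statement1
    (a b c d : ℝ) (hab : a < b) (hcd : c < d)
    (n : ℕ) (hn : 1 ≤ n)
    (φ : Fin n → ℝ → ℂ)
    (hφL2 : ∀ k, MemLp (φ k) 2 (muI a b))
    (hφON : ∀ i j, ∫ x, star (φ i x) * φ j x ∂(muI a b) = if i = j then 1 else 0)
    (h : Fin n → ℝ → ℝ)
    (hhmeas : ∀ k, Measurable (h k))
    (hhbdd : ∀ k, ∃ C : ℝ, ∀ᵐ y ∂(muI c d), |h k y| ≤ C)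
    (T1 : Lp ℂ 2 ((muI a b).prod (muI c d)) →L[ℂ] Lp ℂ 2 ((muI a b).prod (muI c d)))
    (hT1sa : IsSelfAdjoint T1)
    (hT1 : ∀ f : Lp ℂ 2 ((muI a b).prod (muI c d)),
      ∀ᵐ z ∂((muI a b).prod (muI c d)),
        T1 f z = ∫ s, (∑ k, φ k z.1 * star (φ k s) * (h k z.2 : ℂ)) * f (s, z.2) ∂(muI a b))
    -- the orthogonal projections `P k`
    (P : Fin n → (Lp ℂ 2 ((muI a b).prod (muI c d)) →L[ℂ] Lp ℂ 2 ((muI a b).prod (muI c d))))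
    (hP : ∀ k, ∀ f : Lp ℂ 2 ((muI a b).prod (muI c d)),
      ∀ᵐ z ∂((muI a b).prod (muI c d)),
        P k f z = φ k z.1 * ∫ s, star (φ k s) * f (s, z.2) ∂(muI a b))
    (lam : ℝ) (hlam0 : lam ≠ 0) (hlam : lam ∉ ⋃ k, Essran (muI c d) (h k)) :
    ∃ B : Lp ℂ 2 ((muI a b).prod (muI c d)) →L[ℂ] Lp ℂ 2 ((muI a b).prod (muI c d)),
      (T1 - (lam : ℂ) • 1) * B = 1 ∧ B * (T1 - (lam : ℂ) • 1) = 1 ∧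
      ∀ f : Lp ℂ 2 ((muI a b).prod (muI c d)),
        ∀ᵐ z ∂((muI a b).prod (muI c d)),
          B f z = -(1 / (lam : ℂ)) *
            (f z - ∑ k, ((h k z.2 : ℂ) / ((h k z.2 : ℂ) - (lam : ℂ))) * P k f z) := by
  have hlamC : (lam : ℂ) ∉ ⋃ k, essentialRange (muI c d) fun y => (h k y : ℂ) := by
    simpa only [Set.mem_iUnion, ofReal_mem_essentialRange_iff] using hlam
  exact statement1_general (q := 2) (φ := φ) (fun k => (hφL2 k).star) hφON
    (fun k => memLp_top_ofReal (hhmeas k).aestronglyMeasurable (hhbdd k)) hT1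
    (fun k => IsPartialIntegralOperator.separated_iff.2 (hP k)) (ofReal_ne_zero.2 hlam0) hlamC
end
end

section
/- The spectrum of the partial integral operator T₂ is σ(T₂) = {0} ∪ (⋃_{j=1}^m Essran(p_j)). -/
open MeasureTheory Complex

noncomputable section

/-!
Tensoring with `ψ j` is an isometry `V j : L²(μ) → L²(μ × ν)`, orthonormality makes the ranges of
the `V j` mutually orthogonal, and `T = ∑ j, V j ∘ M (p j) ∘ (V j)†` with `M φ` the multiplication
by `φ`. So `T` is block diagonal, with blocks `M (p j)` and `0`. The spectrum of `M φ` is the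
essential range of `φ`, and the block `0` is present because the finitely many `ψ j` cannot span the
infinite-dimensional space `L²(ν)`.
-/

open scoped ENNReal InnerProductSpace

section BlockDiagonal

variable {𝕜 ι K H : Type*} [Field 𝕜] [AddCommGroup K] [Module 𝕜 K] [TopologicalSpace K]
  [AddCommGroup H] [Module 𝕜 H] [TopologicalSpace H]

theorem apply_apply_eq_ite_of_comp_eq_ite [DecidableEq ι] {V : ι → K →L[𝕜] H}
    {W : ι → H →L[𝕜] K} (hWV : ∀ i j, W i ∘L V j = if i = j then 1 else 0) (i j : ι) (x : K) :
    W i (V j x) = if i = j then x else 0 := by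
  rw [← ContinuousLinearMap.comp_apply, hWV]
  split_ifs <;> rfl

variable [IsTopologicalAddGroup K] [ContinuousConstSMul 𝕜 K]
  [IsTopologicalAddGroup H] [ContinuousConstSMul 𝕜 H]

theorem spectrum_subset_of_intertwining {A : K →L[𝕜] K} {T : H →L[𝕜] H} {v : K →L[𝕜] H}
    {w : H →L[𝕜] K} (hwv : w ∘L v = 1) (hTv : T ∘L v = v ∘L A) (hwT : w ∘L T = A ∘L w) :
    spectrum 𝕜 A ⊆ spectrum 𝕜 T := by
  intro l hl hunit
  obtain ⟨R, hTR, hRT⟩ := isUnit_iff_exists.1 hunit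
  have hv : (algebraMap 𝕜 _ l - T) ∘L v = v ∘L (algebraMap 𝕜 _ l - A) := by
    simp only [ContinuousLinearMap.sub_comp, ContinuousLinearMap.comp_sub, hTv]
    congr 1
    ext x
    simp
  have hw : w ∘L (algebraMap 𝕜 _ l - T) = (algebraMap 𝕜 _ l - A) ∘L w := by
    simp only [ContinuousLinearMap.sub_comp, ContinuousLinearMap.comp_sub, hwT]
    congr 1
    ext x
    simp
  refine hl (isUnit_iff_exists.2 ⟨w ∘L R ∘L v, ?_, ?_⟩)
  · calc (algebraMap 𝕜 _ l - A) ∘L w ∘L R ∘L v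
        = w ∘L ((algebraMap 𝕜 _ l - T) * R) ∘L v := by
          rw [← ContinuousLinearMap.comp_assoc, ← hw]; rfl
      _ = 1 := by rw [hTR, ContinuousLinearMap.one_def, ContinuousLinearMap.id_comp, hwv]
  · calc (w ∘L R ∘L v) ∘L (algebraMap 𝕜 _ l - A)
        = w ∘L (R * (algebraMap 𝕜 _ l - T)) ∘L v := by
          rw [ContinuousLinearMap.comp_assoc, ContinuousLinearMap.comp_assoc, ← hv]; rfl
      _ = 1 := by rw [hRT, ContinuousLinearMap.one_def, ContinuousLinearMap.id_comp, hwv]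

theorem zero_mem_spectrum_of_apply_eq_zero {T : H →L[𝕜] H} {u : H} (hu : u ≠ 0) (hTu : T u = 0) :
    0 ∈ spectrum 𝕜 T := by
  rw [spectrum.zero_mem_iff]
  intro hunit
  obtain ⟨R, -, hRT⟩ := isUnit_iff_exists.1 hunit
  exact hu <| calc
    u = (R * T) u := by rw [hRT, one_apply_eq_self]
    _ = 0 := by rw [mul_apply_eq_comp, hTu, map_zero]

variable [Fintype ι] [DecidableEq ι] {V : ι → K →L[𝕜] H} {W : ι → H →L[𝕜] K}

/-- The operator on `H` acting as `A i` on the range of `V i` and as the scalar `c` on the common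
kernel of the `W i`, as an algebra homomorphism in `(c, A)`. The `V i` are embeddings of the
summands and the `W i` are the corresponding coordinate projections. -/
def blockDiagonal (hWV : ∀ i j, W i ∘L V j = if i = j then 1 else 0) :
    𝕜 × (ι → K →L[𝕜] K) →ₐ[𝕜] H →L[𝕜] H :=
  AlgHom.ofLinearMap
    { toFun := fun x => x.1 • (1 - ∑ i, V i ∘L W i) + ∑ i, V i ∘L x.2 i ∘L W i
      map_add' := fun x y => by
        simp only [Prod.fst_add, Prod.snd_add, Pi.add_apply, add_smul, ContinuousLinearMap.add_comp,
          ContinuousLinearMap.comp_add, Finset.sum_add_distrib]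
        abel
      map_smul' := fun c x => by
        simp only [Prod.smul_fst, Prod.smul_snd, Pi.smul_apply, smul_eq_mul, mul_smul, smul_add,
          ContinuousLinearMap.smul_comp, ContinuousLinearMap.comp_smul, Finset.smul_sum,
          RingHom.id_apply] }
    (by simp [ContinuousLinearMap.one_def])
    (fun x y => by
      ext u
      simp [apply_apply_eq_ite_of_comp_eq_ite hWV, mul_smul, smul_sub, Finset.smul_sum, map_sum])

theorem blockDiagonal_zero_fst (hWV : ∀ i j, W i ∘L V j = if i = j then 1 else 0)
    (A : ι → K →L[𝕜] K) : blockDiagonal hWV (0, A) = ∑ i, V i ∘L A i ∘L W i := by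
  simp [blockDiagonal]

theorem spectrum_sum_comp_comp (hWV : ∀ i j, W i ∘L V j = if i = j then 1 else 0)
    {u : H} (hu : u ≠ 0) (hWu : ∀ i, W i u = 0) (A : ι → K →L[𝕜] K) :
    spectrum 𝕜 (∑ i, V i ∘L A i ∘L W i) = {0} ∪ ⋃ i, spectrum 𝕜 (A i) := by
  refine Set.Subset.antisymm ?_ (Set.union_subset ?_ (Set.iUnion_subset fun i => ?_))
  · have hsub := AlgHom.spectrum_apply_subset (blockDiagonal hWV) (0, A)
    rwa [Prod.spectrum_eq, Pi.spectrum_eq, spectrum.zero_eq, blockDiagonal_zero_fst] at hsub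
  · exact Set.singleton_subset_iff.2 (zero_mem_spectrum_of_apply_eq_zero hu (by simp [hWu]))
  · refine spectrum_subset_of_intertwining (v := V i) (w := W i) (by simp [hWV]) ?_ ?_
    · ext x
      simp [apply_apply_eq_ite_of_comp_eq_ite hWV, apply_ite]
    · ext x
      simp [apply_apply_eq_ite_of_comp_eq_ite hWV]

end BlockDiagonal

section EssentialRange

variable {E F α : Type*} [MeasurableSpace α] {μ : Measure α}

theorem mem_support_map_iff_ball [PseudoMetricSpace E] [MeasurableSpace E] [OpensMeasurableSpace E]
    {f : α → E} (hf : AEMeasurable f μ) {z : E} :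
    z ∈ (μ.map f).support ↔ ∀ ε > 0, 0 < μ (f ⁻¹' Metric.ball z ε) := by
  simp only [Metric.nhds_basis_ball.mem_measureSupport,
    Measure.map_apply_of_aemeasurable hf measurableSet_ball]

theorem support_map_isClosedEmbedding [TopologicalSpace E] [MeasurableSpace E] [BorelSpace E]
    [TopologicalSpace F] [MeasurableSpace F] [BorelSpace F] {g : E → F}
    (hg : Topology.IsClosedEmbedding g) (ν : Measure E) :
    (ν.map g).support = g '' ν.support := by
  have hg_range : ∀ᵐ z ∂(ν.map g), z ∈ Set.range g :=
    (ae_map_iff hg.continuous.measurable.aemeasurable hg.isClosed_range.measurableSet).2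
      (ae_of_all _ Set.mem_range_self)
  refine Set.Subset.antisymm (fun z hz => ?_) ?_
  · obtain ⟨x, rfl⟩ := Measure.support_subset_of_isClosed hg.isClosed_range hg_range hz
    refine Set.mem_image_of_mem g ((Measure.mem_support_iff_forall x).2 fun U hU => ?_)
    rw [hg.nhds_eq_comap] at hU
    obtain ⟨O, hO, hOU⟩ := hU
    calc 0 < ν.map g O := (Measure.mem_support_iff_forall _).1 hz O hO
      _ = ν (g ⁻¹' O) := hg.measurableEmbedding.map_apply _ _
      _ ≤ ν U := measure_mono hOU
  · rintro _ ⟨x, hx, rfl⟩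
    refine (Measure.mem_support_iff_forall _).2 fun U hU => ?_
    rw [hg.measurableEmbedding.map_apply]
    exact (Measure.mem_support_iff_forall x).1 hx _ (hg.continuous.continuousAt hU)

theorem Essran_eq_support_map {μ : Measure ℝ} {φ : ℝ → ℝ} (hφ : AEMeasurable φ μ) :
    Essran μ φ = (μ.map φ).support := by
  ext l
  rw [mem_support_map_iff_ball hφ]
  simp only [Real.ball_eq_Ioo]
  rfl

theorem ofReal_image_Essran {μ : Measure ℝ} {φ : ℝ → ℝ} (hφ : AEMeasurable φ μ) :
    (fun r : ℝ => (r : ℂ)) '' Essran μ φ = (μ.map fun x => (φ x : ℂ)).support := by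
  rw [Essran_eq_support_map hφ,
    ← support_map_isClosedEmbedding Complex.isometry_ofReal.isClosedEmbedding,
    AEMeasurable.map_map_of_aemeasurable Complex.measurable_ofReal.aemeasurable hφ]
  rfl

end EssentialRange

section Lp

variable {α E : Type*} [MeasurableSpace α] [NormedAddCommGroup E] {μ : Measure α}

theorem indicatorConstLp_ne_zero {q : ℝ≥0∞} (hq : q ≠ 0) {s : Set α} (hs : MeasurableSet s)
    (hμs : μ s ≠ ∞) (hμs₀ : μ s ≠ 0) {c : E} (hc : c ≠ 0) : indicatorConstLp q hs hμs c ≠ 0 := by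
  have hs_pos : 0 < μ.real s := ENNReal.toReal_pos hμs₀ hμs
  intro h
  have hnorm : ‖c‖ * μ.real s ^ (1 / q.toReal) = 0 := by
    rw [← norm_indicatorConstLp' (hs := hs) (hμs := hμs) hq hμs₀, h, Lp.norm_zero]
  have : 0 < ‖c‖ * μ.real s ^ (1 / q.toReal) := by positivity
  exact this.ne' hnorm

theorem nontrivial_Lp [Nontrivial E] {q : ℝ≥0∞} (hq : q ≠ 0) [SigmaFinite μ] [NeZero μ] :
    Nontrivial (Lp E q μ) := by
  obtain ⟨c, hc⟩ := exists_ne (0 : E)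
  obtain ⟨s, hs, -, hs_pos, hs_top⟩ := Measure.exists_subset_measure_lt_top (μ := μ) .univ
    (Measure.measure_univ_pos.2 (NeZero.ne μ))
  exact nontrivial_of_ne _ 0 (indicatorConstLp_ne_zero hq hs hs_top.ne hs_pos.ne' hc)

theorem memLp_top_ofReal_s7 {φ : α → ℝ} (hφ : AEStronglyMeasurable φ μ)
    (hbdd : ∃ C : ℝ, ∀ᵐ x ∂μ, |φ x| ≤ C) : MemLp (fun x => (φ x : ℂ)) ∞ μ := by
  obtain ⟨C, hC⟩ := hbdd
  exact (memLp_top_of_bound hφ C hC).ofReal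

theorem orthonormal_toLp {𝕜 ι : Type*} [RCLike 𝕜] [DecidableEq ι] {ψ : ι → α → 𝕜}
    (hψ : ∀ j, MemLp (ψ j) 2 μ)
    (hψON : ∀ i j, ∫ x, star (ψ i x) * ψ j x ∂μ = if i = j then 1 else 0) :
    Orthonormal 𝕜 fun j => (hψ j).toLp := by
  refine orthonormal_iff_ite.2 fun i j => ?_
  rw [← hψON i j, L2.inner_def]
  refine integral_congr_ae ?_
  filter_upwards [(hψ i).coeFn_toLp, (hψ j).coeFn_toLp] with x hi hj
  rw [hi, hj, RCLike.inner_apply, mul_comm, starRingEnd_apply]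

end Lp

section MultiplicationOperator

theorem exists_norm_le_mul_norm_of_isUnit {𝕜 E : Type*} [NontriviallyNormedField 𝕜]
    [SeminormedAddCommGroup E] [NormedSpace 𝕜 E] {S : E →L[𝕜] E} (hS : IsUnit S) :
    ∃ C : ℝ, 0 < C ∧ ∀ x, ‖x‖ ≤ C * ‖S x‖ := by
  obtain ⟨R, -, hRS⟩ := isUnit_iff_exists.1 hS
  obtain ⟨C, hC, hbound⟩ := R.bound
  exact ⟨C, hC, fun x => by simpa [← mul_apply_eq_comp, hRS] using hbound (S x)⟩

variable {𝕜 α : Type*} [RCLike 𝕜] [MeasurableSpace α] {μ : Measure α}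

/-- Multiplication by the essentially bounded function `φ`, as an operator on `L^q`. -/
def mulOperator (q : ℝ≥0∞) [Fact (1 ≤ q)] (φ : Lp 𝕜 ∞ μ) : Lp 𝕜 q μ →L[𝕜] Lp 𝕜 q μ :=
  (ContinuousLinearMap.mul 𝕜 𝕜).holderL μ ∞ q q φ

variable {q : ℝ≥0∞} [Fact (1 ≤ q)]

theorem coeFn_mulOperator (φ : Lp 𝕜 ∞ μ) (f : Lp 𝕜 q μ) :
    mulOperator q φ f =ᵐ[μ] fun x => φ x * f x :=
  (ContinuousLinearMap.mul 𝕜 𝕜).coeFn_holder φ f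

theorem coeFn_algebraMap_sub_mulOperator (z : 𝕜) (φ : Lp 𝕜 ∞ μ) (f : Lp 𝕜 q μ) :
    (algebraMap 𝕜 (Lp 𝕜 q μ →L[𝕜] Lp 𝕜 q μ) z - mulOperator q φ) f =ᵐ[μ]
      fun x => (z - φ x) * f x := by
  rw [sub_apply, ContinuousLinearMap.algebraMap_apply]
  filter_upwards [Lp.coeFn_sub (z • f) (mulOperator q φ f), Lp.coeFn_smul z f,
    coeFn_mulOperator φ f] with x hsub hsmul hmul
  rw [hsub, Pi.sub_apply, hsmul, hmul, Pi.smul_apply, smul_eq_mul, sub_mul]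

theorem isUnit_algebraMap_sub_mulOperator {z : 𝕜} {φ : Lp 𝕜 ∞ μ} {ε : ℝ} (hε : 0 < ε)
    (hφ : ∀ᵐ x ∂μ, ε ≤ ‖z - φ x‖) :
    IsUnit (algebraMap 𝕜 (Lp 𝕜 q μ →L[𝕜] Lp 𝕜 q μ) z - mulOperator q φ) := by
  have hinv : MemLp (fun x => (z - φ x)⁻¹) ∞ μ := by
    refine memLp_top_of_bound
      (((Lp.stronglyMeasurable φ).measurable.const_sub z).inv.aestronglyMeasurable) ε⁻¹ ?_
    filter_upwards [hφ] with x hx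
    rw [norm_inv]
    gcongr
  have hne : ∀ᵐ x ∂μ, z - φ x ≠ 0 := by
    filter_upwards [hφ] with x hx
    exact norm_pos_iff.1 (hε.trans_le hx)
  refine isUnit_iff_exists.2 ⟨mulOperator q hinv.toLp, ?_, ?_⟩
  · ext f : 1
    refine Lp.ext ?_
    filter_upwards [coeFn_algebraMap_sub_mulOperator z φ (mulOperator q hinv.toLp f),
      coeFn_mulOperator hinv.toLp f, hinv.coeFn_toLp, hne] with x hsub hmul hinvx hx
    rw [mul_apply_eq_comp, hsub, hmul, hinvx, mul_inv_cancel_left₀ hx, one_apply_eq_self]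
  · ext f : 1
    refine Lp.ext ?_
    filter_upwards [coeFn_algebraMap_sub_mulOperator z φ f, hinv.coeFn_toLp, hne,
      coeFn_mulOperator hinv.toLp ((algebraMap 𝕜 _ z - mulOperator q φ) f)]
      with x hsub hinvx hx hmul
    rw [mul_apply_eq_comp, hmul, hinvx, hsub, inv_mul_cancel_left₀ hx, one_apply_eq_self]

theorem exists_ne_zero_norm_algebraMap_sub_mulOperator_le [SigmaFinite μ] {z : 𝕜} {φ : Lp 𝕜 ∞ μ}
    {ε : ℝ} (hpos : 0 < μ (φ ⁻¹' Metric.ball z ε)) :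
    ∃ f : Lp 𝕜 q μ, f ≠ 0 ∧
      ‖(algebraMap 𝕜 (Lp 𝕜 q μ →L[𝕜] Lp 𝕜 q μ) z - mulOperator q φ) f‖ ≤ ε * ‖f‖ := by
  have hq : q ≠ 0 := (zero_lt_one.trans_le Fact.out).ne'
  obtain ⟨s, hs, hsub, hs_pos, hs_top⟩ := Measure.exists_subset_measure_lt_top
    ((Lp.stronglyMeasurable φ).measurable measurableSet_ball) hpos
  refine ⟨indicatorConstLp q hs hs_top.ne 1,
    indicatorConstLp_ne_zero hq hs hs_top.ne hs_pos.ne' one_ne_zero,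
    Lp.norm_le_mul_norm_of_ae_le_mul ?_⟩
  filter_upwards [coeFn_algebraMap_sub_mulOperator z φ (indicatorConstLp q hs hs_top.ne 1),
    indicatorConstLp_coeFn_notMem (p := q) (hs := hs) (hμs := hs_top.ne) (c := (1 : 𝕜))]
    with x happly hzero
  rw [happly, norm_mul]
  by_cases hx : x ∈ s
  · gcongr
    rw [← dist_eq_norm, dist_comm]
    exact (Metric.mem_ball.1 (hsub hx)).le
  · simp [hzero hx]

theorem spectrum_mulOperator [SigmaFinite μ] (φ : Lp 𝕜 ∞ μ) :
    spectrum 𝕜 (mulOperator q φ) = (μ.map φ).support := by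
  ext z
  rw [mem_support_map_iff_ball (Lp.stronglyMeasurable φ).measurable.aemeasurable]
  constructor
  · intro hz ε hε
    by_contra! hnull
    refine hz (isUnit_algebraMap_sub_mulOperator hε ?_)
    filter_upwards [measure_eq_zero_iff_ae_notMem.1 (nonpos_iff_eq_zero.1 hnull)] with x hx
    rw [← dist_eq_norm, dist_comm]
    exact not_lt.1 hx
  · intro hball hunit
    obtain ⟨C, hC, hbound⟩ := exists_norm_le_mul_norm_of_isUnit hunit
    obtain ⟨f, hf, hle⟩ := exists_ne_zero_norm_algebraMap_sub_mulOperator_le (q := q)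
      (hball (2 * C)⁻¹ (by positivity))
    have : ‖f‖ ≤ ‖f‖ / 2 :=
      calc ‖f‖ ≤ C * ‖(algebraMap 𝕜 _ z - mulOperator q φ) f‖ := hbound f
        _ ≤ C * ((2 * C)⁻¹ * ‖f‖) := by gcongr
        _ = ‖f‖ / 2 := by field_simp
    linarith [norm_pos_iff.2 hf]

theorem eq_zero_of_mulOperator_eq_smul {φ : Lp 𝕜 ∞ μ} {z : 𝕜} (hz : μ (φ ⁻¹' {z}) = 0)
    {f : Lp 𝕜 q μ} (hf : mulOperator q φ f = z • f) : f = 0 := by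
  refine (Lp.eq_zero_iff_ae_eq_zero).2 ?_
  filter_upwards [coeFn_mulOperator φ f, Lp.coeFn_smul z f, measure_eq_zero_iff_ae_notMem.1 hz]
    with x hmul hsmul hx
  rw [hf, hsmul, Pi.smul_apply, smul_eq_mul] at hmul
  exact (mul_eq_mul_right_iff.1 hmul).resolve_left fun h => hx h.symm

end MultiplicationOperator

section InfiniteDimensional

theorem exists_measurable_injective_norm_le_one (α : Type*) [MeasurableSpace α]
    [StandardBorelSpace α] :
    ∃ g : α → ℂ, Measurable g ∧ Function.Injective g ∧ ∀ x, ‖g x‖ ≤ 1 := by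
  have hσ := measurableEmbedding_sigmoid_comp_embeddingReal α
  refine ⟨fun x => ((unitInterval.sigmoid (embeddingReal α x) : ℝ) : ℂ),
    Complex.measurable_ofReal.comp (measurable_subtype_coe.comp hσ.measurable),
    Complex.ofReal_injective.comp (Subtype.val_injective.comp hσ.injective), fun x => ?_⟩
  rw [Complex.norm_of_nonneg (unitInterval.nonneg _)]
  exact unitInterval.le_one _

theorem not_finiteDimensional_Lp {α : Type*} [MeasurableSpace α] [StandardBorelSpace α] (q : ℝ≥0∞)
    [Fact (1 ≤ q)] (μ : Measure α) [SigmaFinite μ] [NullSingletonClass μ] [NeZero μ] :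
    ¬ FiniteDimensional ℂ (Lp ℂ q μ) := by
  -- Multiplication by a bounded injective function has no eigenvector, as its level sets are null.
  intro hfin
  have : Nontrivial (Lp ℂ q μ) := nontrivial_Lp (zero_lt_one.trans_le Fact.out).ne'
  obtain ⟨g, hg_meas, hg_inj, hg_le⟩ := exists_measurable_injective_norm_le_one α
  have hg : MemLp g ∞ μ :=
    memLp_top_of_bound hg_meas.aestronglyMeasurable 1 (ae_of_all _ hg_le)
  obtain ⟨z, hz⟩ := Module.End.exists_eigenvalue (mulOperator q hg.toLp : Lp ℂ q μ →ₗ[ℂ] Lp ℂ q μ)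
  obtain ⟨f, hf⟩ := hz.exists_hasEigenvector
  have hlevel : μ (hg.toLp ⁻¹' {z}) = 0 := by
    rw [measure_congr (hg.coeFn_toLp.preimage {z})]
    exact (Set.subsingleton_singleton.preimage hg_inj).measure_zero μ
  exact hf.2 (eq_zero_of_mulOperator_eq_smul hlevel hf.apply_eq_smul)

theorem exists_ne_zero_forall_inner_eq_zero {𝕜 E ι : Type*} [RCLike 𝕜] [NormedAddCommGroup E]
    [InnerProductSpace 𝕜 E] [Finite ι] (hE : ¬ FiniteDimensional 𝕜 E) (v : ι → E) :
    ∃ w ≠ 0, ∀ i, ⟪v i, w⟫_𝕜 = 0 := by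
  have hspan : Submodule.span 𝕜 (Set.range v) ≠ ⊤ := fun htop =>
    hE (Module.finite_def.2 (htop ▸ Submodule.fg_span (Set.finite_range v)))
  have := FiniteDimensional.span_of_finite 𝕜 (Set.finite_range v)
  obtain ⟨w, hw, hw₀⟩ := Submodule.exists_mem_ne_zero_of_ne_bot
    (mt Submodule.orthogonal_eq_bot_iff.1 hspan)
  exact ⟨w, hw₀, fun i => hw _ (Submodule.subset_span (Set.mem_range_self i))⟩

theorem neZero_muI {a b : ℝ} (hab : a < b) : NeZero (muI a b) :=
  ⟨by simp [Measure.restrict_eq_zero, hab]⟩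

end InfiniteDimensional

section Tensor

variable {𝕜 X Y : Type*} [RCLike 𝕜] [MeasurableSpace X] [MeasurableSpace Y]
  {μ : Measure X} {ν : Measure Y}

theorem memLp_two_mul_prod {u : X → 𝕜} {v : Y → 𝕜} (hu : MemLp u 2 μ) (hv : MemLp v 2 ν) :
    MemLp (fun z : X × Y => u z.1 * v z.2) 2 (μ.prod ν) := by
  refine (memLp_two_iff_integrable_sq_norm (hu.1.comp_fst.mul hv.1.comp_snd)).2 ?_
  simpa only [Pi.mul_apply, norm_mul, mul_pow] using
    ((memLp_two_iff_integrable_sq_norm hu.1).1 hu).mul_prod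
      ((memLp_two_iff_integrable_sq_norm hv.1).1 hv)

/-- The elementary tensor `u ⊗ v` of two square-integrable functions, realized as the function
`(x, y) ↦ u x * v y` in `L²` of the product measure. -/
def tensorLp (u : Lp 𝕜 2 μ) (v : Lp 𝕜 2 ν) : Lp 𝕜 2 (μ.prod ν) :=
  (memLp_two_mul_prod (Lp.memLp u) (Lp.memLp v)).toLp

theorem coeFn_tensorLp (u : Lp 𝕜 2 μ) (v : Lp 𝕜 2 ν) :
    tensorLp u v =ᵐ[μ.prod ν] fun z => u z.1 * v z.2 :=
  MemLp.coeFn_toLp _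

theorem inner_coeFn_tensorLp (u : Lp 𝕜 2 μ) (v : Lp 𝕜 2 ν) (f : Lp 𝕜 2 (μ.prod ν)) :
    (fun z => ⟪tensorLp u v z, f z⟫_𝕜) =ᵐ[μ.prod ν] fun z => star (u z.1 * v z.2) * f z := by
  filter_upwards [coeFn_tensorLp u v] with z hz
  rw [hz, RCLike.inner_apply, mul_comm, starRingEnd_apply]

variable [SFinite μ] [SFinite ν]

theorem inner_tensorLp_tensorLp (u u' : Lp 𝕜 2 μ) (v v' : Lp 𝕜 2 ν) :
    ⟪tensorLp u v, tensorLp u' v'⟫_𝕜 = ⟪u, u'⟫_𝕜 * ⟪v, v'⟫_𝕜 := by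
  simp only [L2.inner_def]
  rw [← integral_prod_mul]
  refine integral_congr_ae ?_
  filter_upwards [coeFn_tensorLp u v, coeFn_tensorLp u' v'] with z h h'
  simp only [h, h', RCLike.inner_apply, map_mul]
  ring

theorem norm_tensorLp (u : Lp 𝕜 2 μ) (v : Lp 𝕜 2 ν) : ‖tensorLp u v‖ = ‖u‖ * ‖v‖ := by
  have hinner := inner_tensorLp_tensorLp (𝕜 := 𝕜) u u v v
  simp only [inner_self_eq_norm_sq_to_K] at hinner
  refine (sq_eq_sq₀ (norm_nonneg _) (by positivity)).1 ?_
  rw [mul_pow]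
  exact_mod_cast hinner

/-- Tensoring on the right with `v`, as a bounded operator on `L²`. Its adjoint integrates against
`star v` in the second variable. -/
def tensorRight (v : Lp 𝕜 2 ν) : Lp 𝕜 2 μ →L[𝕜] Lp 𝕜 2 (μ.prod ν) :=
  LinearMap.mkContinuous
    { toFun := fun u => tensorLp u v
      map_add' := fun u u' => Lp.ext <| by
        filter_upwards [coeFn_tensorLp (u + u') v, coeFn_tensorLp u v, coeFn_tensorLp u' v,
          Lp.coeFn_add (tensorLp u v) (tensorLp u' v),
          Measure.quasiMeasurePreserving_fst.ae (Lp.coeFn_add u u')] with z huu' hu hu' hadd hadd₁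
        rw [huu', hadd, Pi.add_apply, hu, hu', hadd₁, Pi.add_apply, add_mul]
      map_smul' := fun c u => Lp.ext <| by
        filter_upwards [coeFn_tensorLp (c • u) v, coeFn_tensorLp u v,
          Lp.coeFn_smul c (tensorLp u v),
          Measure.quasiMeasurePreserving_fst.ae (Lp.coeFn_smul c u)] with z hcu hu hsmul hsmul₁
        rw [hcu, RingHom.id_apply, hsmul, Pi.smul_apply, hu, hsmul₁, Pi.smul_apply,
          smul_mul_assoc] }
    ‖v‖ fun u => by rw [mul_comm]; exact (norm_tensorLp u v).le

theorem tensorRight_apply (u : Lp 𝕜 2 μ) (v : Lp 𝕜 2 ν) : tensorRight v u = tensorLp u v := rfl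

theorem adjoint_tensorRight_tensorLp (u : Lp 𝕜 2 μ) (v v' : Lp 𝕜 2 ν) :
    (tensorRight v).adjoint (tensorLp u v') = ⟪v, v'⟫_𝕜 • u := by
  refine ext_inner_left 𝕜 fun w => ?_
  rw [ContinuousLinearMap.adjoint_inner_right, tensorRight_apply, inner_tensorLp_tensorLp,
    inner_smul_right, mul_comm]

theorem adjoint_tensorRight_comp_tensorRight {ι : Type*} [DecidableEq ι] {ψ : ι → Lp 𝕜 2 ν}
    (hψ : Orthonormal 𝕜 ψ) (i j : ι) :
    (tensorRight (ψ i)).adjoint ∘L tensorRight (ψ j) =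
      if i = j then (1 : Lp 𝕜 2 μ →L[𝕜] Lp 𝕜 2 μ) else 0 := by
  ext u : 1
  rw [ContinuousLinearMap.comp_apply, tensorRight_apply, adjoint_tensorRight_tensorLp,
    orthonormal_iff_ite.1 hψ]
  split_ifs <;> simp

end Tensor

section AdjointTensor

variable {𝕜 X Y : Type*} [RCLike 𝕜] [MeasurableSpace X] [MeasurableSpace Y]
  {μ : Measure X} {ν : Measure Y} {s : Set X}

theorem inner_coeFn_tensorLp_indicatorConstLp (hs : MeasurableSet s) (hμs : μ s ≠ ∞)
    (v : Lp 𝕜 2 ν) (f : Lp 𝕜 2 (μ.prod ν)) :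
    (fun z => ⟪tensorLp (indicatorConstLp 2 hs hμs 1) v z, f z⟫_𝕜) =ᵐ[μ.prod ν]
      (s ×ˢ Set.univ).indicator fun z => star (v z.2) * f z := by
  filter_upwards [inner_coeFn_tensorLp (indicatorConstLp 2 hs hμs 1) v f,
    Measure.quasiMeasurePreserving_fst.ae
      (indicatorConstLp_coeFn (p := 2) (hs := hs) (hμs := hμs) (c := (1 : 𝕜)))] with z hinner hz
  rw [hinner]
  by_cases hzs : z.1 ∈ s <;> simp [hz, hzs]

variable [SFinite ν]

theorem integrable_star_mul_restrict_prod [SFinite μ] (hs : MeasurableSet s) (hμs : μ s ≠ ∞)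
    (v : Lp 𝕜 2 ν) (f : Lp 𝕜 2 (μ.prod ν)) :
    Integrable (fun z => star (v z.2) * f z) ((μ.restrict s).prod ν) := by
  have hindicator := (integrable_congr (inner_coeFn_tensorLp_indicatorConstLp hs hμs v f)).1
    (L2.integrable_inner _ _)
  rwa [integrable_indicator_iff (hs.prod .univ), IntegrableOn, ← Measure.prod_restrict,
    Measure.restrict_univ] at hindicator

theorem inner_tensorLp_indicatorConstLp [SFinite μ] (hs : MeasurableSet s) (hμs : μ s ≠ ∞)
    (v : Lp 𝕜 2 ν) (f : Lp 𝕜 2 (μ.prod ν)) :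
    ⟪tensorLp (indicatorConstLp 2 hs hμs 1) v, f⟫_𝕜 =
      ∫ z, star (v z.2) * f z ∂((μ.restrict s).prod ν) := by
  rw [L2.inner_def, integral_congr_ae (inner_coeFn_tensorLp_indicatorConstLp hs hμs v f),
    integral_indicator (hs.prod .univ), ← Measure.prod_restrict, Measure.restrict_univ]

variable [SigmaFinite μ]

theorem coeFn_adjoint_tensorRight (v : Lp 𝕜 2 ν) (f : Lp 𝕜 2 (μ.prod ν)) :
    (tensorRight v).adjoint f =ᵐ[μ] fun x => ∫ y, star (v y) * f (x, y) ∂ν := by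
  refine ae_eq_of_forall_setIntegral_eq_of_sigmaFinite
    (fun s _ hμs => integrableOn_Lp_of_measure_ne_top _ (by simp) hμs.ne)
    (fun s hs hμs => (integrable_star_mul_restrict_prod hs hμs.ne v f).integral_prod_left)
    fun s hs hμs => ?_
  calc ∫ x in s, (tensorRight v).adjoint f x ∂μ
      = ⟪tensorLp (indicatorConstLp 2 hs hμs.ne 1) v, f⟫_𝕜 := by
        rw [← L2.inner_indicatorConstLp_one hs hμs.ne, ContinuousLinearMap.adjoint_inner_right,
          tensorRight_apply]
    _ = ∫ z, star (v z.2) * f z ∂((μ.restrict s).prod ν) :=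
        inner_tensorLp_indicatorConstLp hs hμs.ne v f
    _ = ∫ x in s, ∫ y, star (v y) * f (x, y) ∂ν ∂μ :=
        integral_prod _ (integrable_star_mul_restrict_prod hs hμs.ne v f)

theorem coeFn_tensorRight_comp_mulOperator_comp_adjoint {ψ : Y → 𝕜} (hψ : MemLp ψ 2 ν) {p : X → 𝕜}
    (hp : MemLp p ∞ μ) (f : Lp 𝕜 2 (μ.prod ν)) :
    (tensorRight hψ.toLp ∘L mulOperator 2 hp.toLp ∘L (tensorRight hψ.toLp).adjoint) f =ᵐ[μ.prod ν]
      fun z => p z.1 * ψ z.2 * ∫ t, star (ψ t) * f (z.1, t) ∂ν := by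
  have hadj : (tensorRight hψ.toLp).adjoint f =ᵐ[μ] fun x => ∫ t, star (ψ t) * f (x, t) ∂ν := by
    filter_upwards [coeFn_adjoint_tensorRight hψ.toLp f] with x hx
    rw [hx]
    exact integral_congr_ae (hψ.coeFn_toLp.mono fun t ht => by simp only [ht])
  filter_upwards [
    coeFn_tensorLp (mulOperator 2 hp.toLp ((tensorRight hψ.toLp).adjoint f)) hψ.toLp,
    Measure.quasiMeasurePreserving_fst.ae
      (coeFn_mulOperator hp.toLp ((tensorRight hψ.toLp).adjoint f)),
    Measure.quasiMeasurePreserving_fst.ae hp.coeFn_toLp,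
    Measure.quasiMeasurePreserving_fst.ae hadj,
    Measure.quasiMeasurePreserving_snd.ae hψ.coeFn_toLp] with z htensor hmul hpz hadjz hψz
  rw [ContinuousLinearMap.comp_apply, ContinuousLinearMap.comp_apply, tensorRight_apply,
    htensor, hmul, hpz, hadjz, hψz, mul_right_comm]

end AdjointTensor

section PartialIntegralOperator

variable {𝕜 X Y ι : Type*} [RCLike 𝕜] [MeasurableSpace X] [MeasurableSpace Y] [Fintype ι]
  {μ : Measure X} {ν : Measure Y} [SFinite ν]

theorem ae_memLp_two_prodMk_left [SFinite μ] {f : X × Y → 𝕜} (hf : MemLp f 2 (μ.prod ν)) :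
    ∀ᵐ x ∂μ, MemLp (fun y => f (x, y)) 2 ν := by
  filter_upwards [hf.1.prodMk_left, ((memLp_two_iff_integrable_sq_norm hf.1).1 hf).prod_right_ae]
    with x hmeas hint
  exact (memLp_two_iff_integrable_sq_norm hmeas).2 hint

theorem eq_sum_tensorRight_comp_mulOperator_comp_adjoint [SigmaFinite μ]
    {ψ : ι → Y → 𝕜} (hψ : ∀ j, MemLp (ψ j) 2 ν)
    {p : ι → X → 𝕜} (hp : ∀ j, MemLp (p j) ∞ μ)
    {T : Lp 𝕜 2 (μ.prod ν) →L[𝕜] Lp 𝕜 2 (μ.prod ν)}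
    (hT : ∀ f : Lp 𝕜 2 (μ.prod ν), ∀ᵐ z ∂(μ.prod ν),
      T f z = ∫ t, (∑ j, p j z.1 * ψ j z.2 * star (ψ j t)) * f (z.1, t) ∂ν) :
    T = ∑ j, tensorRight (hψ j).toLp ∘L mulOperator 2 (hp j).toLp ∘L
      (tensorRight (hψ j).toLp).adjoint := by
  ext f : 1
  refine Lp.ext ?_
  rw [sum_apply]
  filter_upwards [hT f, Lp.coeFn_finsetSum Finset.univ fun j =>
      (tensorRight (hψ j).toLp ∘L mulOperator 2 (hp j).toLp ∘L
        (tensorRight (hψ j).toLp).adjoint) f,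
    ae_all_iff.2 fun j => coeFn_tensorRight_comp_mulOperator_comp_adjoint (hψ j) (hp j) f,
    Measure.quasiMeasurePreserving_fst.ae (ae_memLp_two_prodMk_left (Lp.memLp f))]
    with z hTz hsum hterm hfiber
  have hint (j : ι) : Integrable (fun t => star (ψ j t) * f (z.1, t)) ν :=
    (hψ j).star.integrable_mul hfiber
  rw [hTz, hsum, Finset.sum_apply]
  simp only [hterm, Finset.sum_mul, mul_assoc _ (star _)]
  rw [integral_finsetSum _ fun j _ => (hint j).const_mul _]
  simp only [integral_const_mul]

theorem statement7_general [SigmaFinite μ] [NeZero μ] (hν : ¬ FiniteDimensional 𝕜 (Lp 𝕜 2 ν))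
    {ψ : ι → Y → 𝕜} (hψ : ∀ j, MemLp (ψ j) 2 ν)
    (hψON : Orthonormal 𝕜 fun j => (hψ j).toLp) {p : ι → X → 𝕜} (hp : ∀ j, MemLp (p j) ∞ μ)
    {T : Lp 𝕜 2 (μ.prod ν) →L[𝕜] Lp 𝕜 2 (μ.prod ν)}
    (hT : ∀ f : Lp 𝕜 2 (μ.prod ν), ∀ᵐ z ∂(μ.prod ν),
      T f z = ∫ t, (∑ j, p j z.1 * ψ j z.2 * star (ψ j t)) * f (z.1, t) ∂ν) :
    spectrum 𝕜 T = {0} ∪ ⋃ j, (μ.map (p j)).support := by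
  classical
  have : Nontrivial (Lp 𝕜 2 μ) := nontrivial_Lp two_ne_zero
  obtain ⟨u, hu⟩ := exists_ne (0 : Lp 𝕜 2 μ)
  obtain ⟨v, hv, hψv⟩ := exists_ne_zero_forall_inner_eq_zero hν fun j => (hψ j).toLp
  have huv : tensorLp u v ≠ 0 := norm_pos_iff.1 <| by rw [norm_tensorLp]; positivity
  have hadj_huv (j : ι) : (tensorRight (hψ j).toLp).adjoint (tensorLp u v) = 0 := by
    rw [adjoint_tensorRight_tensorLp, hψv, zero_smul]
  rw [eq_sum_tensorRight_comp_mulOperator_comp_adjoint hψ hp hT,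
    spectrum_sum_comp_comp (adjoint_tensorRight_comp_tensorRight hψON) huv hadj_huv]
  simp only [spectrum_mulOperator, Measure.map_congr (hp _).coeFn_toLp]

end PartialIntegralOperator

theorem statement7
    (a b c d : ℝ) (hab : a < b) (hcd : c < d)
    (m : ℕ) (hm : 1 ≤ m)
    (ψ : Fin m → ℝ → ℂ)
    (hψL2 : ∀ j, MemLp (ψ j) 2 (muI c d))
    (hψON : ∀ i j, ∫ y, star (ψ i y) * ψ j y ∂(muI c d) = if i = j then 1 else 0)
    (p : Fin m → ℝ → ℝ)
    (hpmeas : ∀ j, Measurable (p j))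
    (hpbdd : ∀ j, ∃ C : ℝ, ∀ᵐ x ∂(muI a b), |p j x| ≤ C)
    (T2 : Lp ℂ 2 ((muI a b).prod (muI c d)) →L[ℂ] Lp ℂ 2 ((muI a b).prod (muI c d)))
    (hT2sa : IsSelfAdjoint T2)
    (hT2 : ∀ f : Lp ℂ 2 ((muI a b).prod (muI c d)),
      ∀ᵐ z ∂((muI a b).prod (muI c d)),
        T2 f z = ∫ t, (∑ j, (p j z.1 : ℂ) * ψ j z.2 * star (ψ j t)) * f (z.1, t) ∂(muI c d)) :
    spectrum ℂ T2 = {0} ∪ ⋃ j : Fin m, (fun r : ℝ => (r : ℂ)) '' Essran (muI a b) (p j) := by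
  have := neZero_muI hab
  have := neZero_muI hcd
  rw [statement7_general (not_finiteDimensional_Lp 2 (muI c d)) hψL2 (orthonormal_toLp hψL2 hψON)
    (fun j => memLp_top_ofReal_s7 (hpmeas j).aestronglyMeasurable (hpbdd j)) hT2]
  simp only [ofReal_image_Essran (hpmeas _).aemeasurable]
end
end
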